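/- Let P be a Markov transition kernel on a Polish space Y with distance-like function d and induced Wasserstein-like function W. Then for any probability measures μ₁, μ₂ on Y, W(μ₁P, μ₂P) ≤ τ(P)·W(μ₁, μ₂), where τ(P) is the Wasserstein contraction coefficient of P. -/

import Mathlib

open MeasureTheory ENNReal ProbabilityTheory

/-- The Wasserstein-like function induced by a distance-like function `d`:
infimum over couplings `ξ` of `μ₁, μ₂` of `∫ d dξ`. -/
noncomputable def wassersteinLike {Y : Type*} [MeasurableSpace Y]
    (d : Y → Y → ℝ) (μ₁ μ₂ : Measure Y) : ℝ≥0∞ :=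
  ⨅ (ξ : Measure (Y × Y)) (_ : ξ.map Prod.fst = μ₁) (_ : ξ.map Prod.snd = μ₂),
    ∫⁻ p, ENNReal.ofReal (d p.1 p.2) ∂ξ

/-- The Wasserstein contraction coefficient
`τ(P) = sup_{y₁ ≠ y₂} W(P(y₁,·), P(y₂,·)) / d(y₁,y₂)`. -/
noncomputable def wContractionCoeff {Y : Type*} [MeasurableSpace Y]
    (d : Y → Y → ℝ) (P : Kernel Y Y) : ℝ≥0∞ :=
  ⨆ (y₁ : Y) (y₂ : Y) (_ : y₁ ≠ y₂),
    wassersteinLike d (P y₁) (P y₂) / ENNReal.ofReal (d y₁ y₂)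

theorem aux_le {Y : Type*} [MeasurableSpace Y] (d : Y → Y → ℝ) {μ₁ μ₂ : Measure Y}
    (ξ : Measure (Y × Y)) (h1 : ξ.map Prod.fst = μ₁) (h2 : ξ.map Prod.snd = μ₂) :
    wassersteinLike d μ₁ μ₂ ≤ ∫⁻ p, ENNReal.ofReal (d p.1 p.2) ∂ξ :=
  (iInf_le _ ξ).trans ((iInf_le _ h1).trans (iInf_le _ h2))

open Filter Topology in
theorem aux_lsc {Ω : Type*} [MeasurableSpace Ω] [TopologicalSpace Ω] [OpensMeasurableSpace Ω]
    {μ : Measure Ω} {μs : ℕ → Measure Ω} {f : Ω → ℝ} (f_lsc : LowerSemicontinuous f) (f_nn : 0 ≤ f)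
    (h_opens : ∀ G, IsOpen G → μ G ≤ atTop.liminf (fun i ↦ μs i G)) :
    ∫⁻ x, ENNReal.ofReal (f x) ∂μ ≤ atTop.liminf (fun i ↦ ∫⁻ x, ENNReal.ofReal (f x) ∂(μs i)) := by
  simp_rw [lintegral_eq_lintegral_meas_lt _ (Eventually.of_forall f_nn)
    f_lsc.measurable.aemeasurable]
  calc ∫⁻ (t : ℝ) in Set.Ioi 0, μ {a | t < f a}
      ≤ ∫⁻ (t : ℝ) in Set.Ioi 0, atTop.liminf (fun i ↦ (μs i) {a | t < f a}) :=
        lintegral_mono (fun t ↦ h_opens _ (f_lsc.isOpen_preimage t))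
    _ ≤ atTop.liminf (fun i ↦ ∫⁻ (t : ℝ) in Set.Ioi 0, (μs i) {a | t < f a}) :=
        lintegral_liminf_le (fun n ↦ Antitone.measurable (fun s t hst ↦
            measure_mono (fun ω hω ↦ lt_of_le_of_lt hst hω)))

open Filter Topology in
theorem aux_tight {Y : Type*} [TopologicalSpace Y] [PolishSpace Y] [MeasurableSpace Y]
    [BorelSpace Y] {α : ProbabilityMeasure Y} {αs : ℕ → ProbabilityMeasure Y}
    (h : Tendsto αs atTop (𝓝 α)) :
    IsTightMeasureSet (Set.range fun n => (αs n : Measure Y)) := by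
  letI := TopologicalSpace.upgradeIsCompletelyMetrizable Y
  have hc : IsCompact (closure (insert α (Set.range αs))) := h.isCompact_insert_range.closure
  refine (isTightMeasureSet_of_isCompact_closure hc).subset ?_
  rintro _ ⟨n, rfl⟩
  exact ⟨αs n, Or.inr ⟨n, rfl⟩, rfl⟩

open Filter Topology in
theorem aux_limit {Y : Type*} [TopologicalSpace Y] [PolishSpace Y] [MeasurableSpace Y]
    [BorelSpace Y] (d : Y → Y → ℝ) (hd_nonneg : ∀ x y, 0 ≤ d x y)
    (hd_lsc : LowerSemicontinuous (fun p : Y × Y => d p.1 p.2))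
    {α β : ProbabilityMeasure Y} {ζ : ℕ → ProbabilityMeasure (Y × Y)}
    (h1 : Tendsto (fun n => (ζ n).map (f := Prod.fst) measurable_fst.aemeasurable) atTop (𝓝 α))
    (h2 : Tendsto (fun n => (ζ n).map (f := Prod.snd) measurable_snd.aemeasurable) atTop (𝓝 β))
    {c : ℕ → ℝ≥0∞} {C : ℝ≥0∞} (hc : Tendsto c atTop (𝓝 C))
    (hζ : ∀ n, ∫⁻ p, ENNReal.ofReal (d p.1 p.2) ∂(ζ n : Measure (Y × Y)) ≤ c n) :
    wassersteinLike d (α : Measure Y) (β : Measure Y) ≤ C := by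
  have ht : IsTightMeasureSet {((μ : ProbabilityMeasure (Y × Y)) : Measure (Y × Y)) |
      μ ∈ Set.range ζ} := by
    apply IsTightMeasureSet.prodMk
    · refine (aux_tight h1).subset ?_
      rintro _ ⟨_, ⟨_, ⟨n, rfl⟩, rfl⟩, rfl⟩
      exact ⟨n, rfl⟩
    · refine (aux_tight h2).subset ?_
      rintro _ ⟨_, ⟨_, ⟨n, rfl⟩, rfl⟩, rfl⟩
      exact ⟨n, rfl⟩
  have hcpt := isCompact_closure_of_isTightMeasureSet ht
  obtain ⟨z, -, φ, hφ, hz⟩ := hcpt.tendsto_subseq (x := ζ) (fun n => subset_closure ⟨n, rfl⟩)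
  have e1 := tendsto_nhds_unique (h1.comp hφ.tendsto_atTop)
    (((ProbabilityMeasure.continuous_map continuous_fst).tendsto z).comp hz)
  have e2 := tendsto_nhds_unique (h2.comp hφ.tendsto_atTop)
    (((ProbabilityMeasure.continuous_map continuous_snd).tendsto z).comp hz)
  refine (aux_le d (z : Measure (Y × Y)) ?_ ?_).trans ?_
  · rw [e1]; rfl
  · rw [e2]; rfl
  refine (aux_lsc hd_lsc (fun p => hd_nonneg _ _)
    (fun G hG => ProbabilityMeasure.le_liminf_measure_open_of_tendsto hz hG)).trans ?_
  rw [← (hc.comp hφ.tendsto_atTop).liminf_eq]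
  exact liminf_le_liminf (Eventually.of_forall fun n => hζ _)

theorem aux_select {X E : Type*} [MeasurableSpace X] [Nonempty X] [PseudoMetricSpace E]
    [SecondCountableTopology E] [MeasurableSpace E] [OpensMeasurableSpace E] {G : X → E}
    (hG : Measurable G) :
    ∃ x : ℕ → X, ∀ ε : ℝ, 0 < ε → ∃ k : X → ℕ, Measurable k ∧
      ∀ p, dist (G p) (G (x (k p))) < ε := by
  classical
  obtain ⟨u, hu⟩ := TopologicalSpace.exists_dense_seq (Set.range G)
  choose x hx using fun n => (u n).2
  refine ⟨x, fun ε hε => ?_⟩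
  have hp : ∀ p, ∃ n, dist (G p) (G (x n)) < ε := by
    intro p
    obtain ⟨n, hn⟩ := hu.exists_dist_lt ⟨G p, p, rfl⟩ hε
    exact ⟨n, by rw [hx]; exact hn⟩
  refine ⟨fun p => Nat.find (hp p), measurable_find hp fun k => ?_, fun p => Nat.find_spec (hp p)⟩
  exact measurableSet_lt (hG.dist measurable_const) measurable_const

theorem aux_point {Y : Type*} [MeasurableSpace Y]
    (d : Y → Y → ℝ) (hd_nonneg : ∀ x y, 0 ≤ d x y) (hd_eq : ∀ x y, d x y = 0 ↔ x = y)
    (hd_m : Measurable (fun p : Y × Y => d p.1 p.2))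
    (P : Kernel Y Y) (y₁ y₂ : Y) :
    wassersteinLike d (P y₁) (P y₂) ≤ wContractionCoeff d P * ENNReal.ofReal (d y₁ y₂) := by
  by_cases h : y₁ = y₂
  · subst h
    have hm : Measurable (fun y : Y => (y, y)) := by fun_prop
    refine (aux_le d ((P y₁).map fun y => (y, y)) ?_ ?_).trans ?_
    · rw [Measure.map_map measurable_fst hm]; exact Measure.map_id
    · rw [Measure.map_map measurable_snd hm]; exact Measure.map_id
    rw [lintegral_map hd_m.ennreal_ofReal hm]
    simp [(hd_eq _ _).2 rfl]
  · have h0 : 0 < d y₁ y₂ := lt_of_le_of_ne (hd_nonneg _ _) fun h' => h ((hd_eq _ _).1 h'.symm)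
    rw [← ENNReal.div_le_iff (by simpa using h0) ENNReal.ofReal_ne_top]
    exact le_iSup_of_le y₁ (le_iSup_of_le y₂ (le_iSup_of_le h le_rfl))

open Filter Topology in
theorem aux_main {Y : Type*} [TopologicalSpace Y] [PolishSpace Y] [MeasurableSpace Y]
    [BorelSpace Y] (d : Y → Y → ℝ) (hd_nonneg : ∀ x y, 0 ≤ d x y)
    (hd_eq : ∀ x y, d x y = 0 ↔ x = y)
    (hd_lsc : LowerSemicontinuous (fun p : Y × Y => d p.1 p.2))
    (P : Kernel Y Y) [IsMarkovKernel P]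
    (hP : wContractionCoeff d P < ⊤)
    (ξ : Measure (Y × Y)) [IsProbabilityMeasure ξ] :
    wassersteinLike d ((ξ.map Prod.fst).bind P) ((ξ.map Prod.snd).bind P) ≤
      wContractionCoeff d P * ∫⁻ p, ENNReal.ofReal (d p.1 p.2) ∂ξ := by
  set τ := wContractionCoeff d P with hτ
  have hd_m : Measurable (fun p : Y × Y => d p.1 p.2) := hd_lsc.measurable
  haveI : Nonempty (Y × Y) := nonempty_of_isProbabilityMeasure ξ
  let ι := Finset (TopologicalSpace.countableBasis Y)
  let B : ι → Set Y := fun s => ⋂ b ∈ s, (b : Set Y)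
  have hBo : ∀ s, IsOpen (B s) := fun s => isOpen_biInter_finset fun b _ =>
    TopologicalSpace.isOpen_of_mem_countableBasis b.2
  have hBm : ∀ s, MeasurableSet (B s) := fun s => (hBo s).measurableSet
  have hpi : IsPiSystem (Set.range B) := by
    classical
    rintro _ ⟨s, rfl⟩ _ ⟨t, rfl⟩ -
    exact ⟨(s ∪ t : Finset _), by
      ext y
      simp only [B, Set.mem_inter_iff, Set.mem_iInter]
      exact ⟨fun h => ⟨fun b hb => h b (Finset.mem_union_left _ hb), fun b hb => h b (Finset.mem_union_right _ hb)⟩,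
        fun h b hb => (Finset.mem_union.1 hb).elim (h.1 b) (h.2 b)⟩⟩
  have hnb : ∀ (u : Set Y), IsOpen u → ∀ x ∈ u, ∃ s ∈ Set.range B, s ∈ 𝓝 x ∧ s ⊆ u := by
    intro u hu x hx
    obtain ⟨v, hv, hxv, hvu⟩ :=
      (TopologicalSpace.isBasis_countableBasis Y).exists_subset_of_mem_open hx hu
    have hB : B ({⟨v, hv⟩} : Finset _) = v := by
      simp only [B]
      exact Finset.set_biInter_singleton _ _
    refine ⟨_, ⟨_, rfl⟩, (hBo ({⟨v, hv⟩} : Finset _)).mem_nhds ?_, ?_⟩ <;> rwa [hB]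
  letI : MetricSpace (ι → ℝ≥0∞ × ℝ≥0∞) := TopologicalSpace.metrizableSpaceMetric _
  let G : Y × Y → ℝ × (ι → ℝ≥0∞ × ℝ≥0∞) := fun p => (d p.1 p.2, fun i => (P p.1 (B i), P p.2 (B i)))
  have hPm1 : ∀ i, Measurable fun p : Y × Y => P p.1 (B i) := fun i =>
    (P.measurable_coe (hBm i)).comp measurable_fst
  have hPm2 : ∀ i, Measurable fun p : Y × Y => P p.2 (B i) := fun i =>
    (P.measurable_coe (hBm i)).comp measurable_snd
  have hG : Measurable G := hd_m.prodMk (measurable_pi_lambda _ fun i => (hPm1 i).prodMk (hPm2 i))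
  obtain ⟨x, hx⟩ := aux_select hG
  have hpos : ∀ n : ℕ, (0 : ℝ) < 1 / ((n : ℝ) + 1) := fun n => by positivity
  choose k hkm hk using fun n : ℕ => hx _ (hpos n)
  have hGlim : ∀ p, Tendsto (fun n => G (x (k n p))) atTop (𝓝 (G p)) := by
    intro p
    rw [tendsto_iff_dist_tendsto_zero]
    refine squeeze_zero (fun _ => dist_nonneg) (fun n => ?_)
      (tendsto_one_div_add_atTop_nhds_zero_nat (𝕜 := ℝ))
    rw [dist_comm]; exact (hk n p).le
  have hdle : ∀ n p, d (x (k n p)).1 (x (k n p)).2 ≤ d p.1 p.2 + 1 / ((n : ℝ) + 1) := by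
    intro n p
    have h1 : dist (d p.1 p.2) (d (x (k n p)).1 (x (k n p)).2) ≤ _ :=
      (le_max_left _ _).trans (hk n p).le
    rw [Real.dist_eq, abs_le] at h1
    linarith [h1.1]
  have hη : ∀ n j : ℕ, ∃ η : Measure (Y × Y), η.map Prod.fst = P (x j).1 ∧
      η.map Prod.snd = P (x j).2 ∧ ∫⁻ p, ENNReal.ofReal (d p.1 p.2) ∂η ≤
        τ * ENNReal.ofReal (d (x j).1 (x j).2) + ENNReal.ofReal (1 / ((n : ℝ) + 1)) := by
    intro n j
    have := (aux_point d hd_nonneg hd_eq hd_m P (x j).1 (x j).2).trans_lt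
      (ENNReal.lt_add_right (ENNReal.mul_ne_top hP.ne ENNReal.ofReal_ne_top)
        (ENNReal.ofReal_pos.2 (hpos n)).ne')
    simp only [wassersteinLike, iInf_lt_iff] at this
    obtain ⟨η, h1, h2, h3⟩ := this
    exact ⟨η, h1, h2, h3.le⟩
  choose η hη1 hη2 hη3 using hη
  have hηp : ∀ n j, IsProbabilityMeasure (η n j) := by
    intro n j
    constructor
    have := congrArg (fun m => m Set.univ) (hη1 n j)
    simpa [Measure.map_apply measurable_fst] using this
  have hηm : ∀ n, Measurable fun p => η n (k n p) := fun n =>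
    (measurable_from_nat (f := η n)).comp (hkm n)
  let ζ' : ℕ → Measure (Y × Y) := fun n => ξ.bind fun p => η n (k n p)
  have hζp : ∀ n, IsProbabilityMeasure (ζ' n) := by
    intro n
    constructor
    simp [ζ', Measure.bind_apply MeasurableSet.univ (hηm n).aemeasurable]
  let ζ : ℕ → ProbabilityMeasure (Y × Y) := fun n => ⟨ζ' n, hζp n⟩
  have hf1 : IsProbabilityMeasure (ξ.map Prod.fst) :=
    Measure.isProbabilityMeasure_map measurable_fst.aemeasurable
  have hf2 : IsProbabilityMeasure (ξ.map Prod.snd) :=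
    Measure.isProbabilityMeasure_map measurable_snd.aemeasurable
  have hα : IsProbabilityMeasure ((ξ.map Prod.fst).bind P) := inferInstance
  have hβ : IsProbabilityMeasure ((ξ.map Prod.snd).bind P) := inferInstance
  obtain ⟨A, hA⟩ : ∃ A : ProbabilityMeasure Y, (A : Measure Y) = (ξ.map Prod.fst).bind P :=
    ⟨⟨_, hα⟩, rfl⟩
  obtain ⟨A', hA'⟩ : ∃ A : ProbabilityMeasure Y, (A : Measure Y) = (ξ.map Prod.snd).bind P :=
    ⟨⟨_, hβ⟩, rfl⟩
  have hc1 : ∀ i p, Tendsto (fun n => P (x (k n p)).1 (B i)) atTop (𝓝 (P p.1 (B i))) := by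
    intro i p
    have h := (tendsto_pi_nhds.1 ((continuous_snd.tendsto _).comp (hGlim p)) i)
    exact (continuous_fst.tendsto _).comp h
  have hc2 : ∀ i p, Tendsto (fun n => P (x (k n p)).2 (B i)) atTop (𝓝 (P p.2 (B i))) := by
    intro i p
    have h := (tendsto_pi_nhds.1 ((continuous_snd.tendsto _).comp (hGlim p)) i)
    exact (continuous_snd.tendsto _).comp h
  have l1 : Tendsto (fun n => (ζ n).map (f := Prod.fst) measurable_fst.aemeasurable) atTop
      (𝓝 A) := by
    refine hpi.tendsto_probabilityMeasure_of_tendsto_of_mem ?_ hnb ?_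
    · rintro _ ⟨i, rfl⟩; exact hBm i
    rintro _ ⟨i, rfl⟩
    rw [← ENNReal.tendsto_coe]
    simp only [ProbabilityMeasure.ennreal_coeFn_eq_coeFn_toMeasure]
    have e : ∀ n, (((ζ n).map (f := Prod.fst) measurable_fst.aemeasurable :
        ProbabilityMeasure Y) : Measure Y) (B i) = ∫⁻ p, P (x (k n p)).1 (B i) ∂ξ := by
      intro n
      change (ζ' n).map Prod.fst (B i) = _
      rw [Measure.map_apply measurable_fst (hBm i), Measure.bind_apply
        (measurable_fst (hBm i)) (hηm n).aemeasurable]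
      refine lintegral_congr fun p => ?_
      rw [← hη1 n (k n p), Measure.map_apply measurable_fst (hBm i)]
    simp only [e]
    rw [hA]
    rw [Measure.bind_apply (hBm i) P.measurable.aemeasurable,
      lintegral_map (P.measurable_coe (hBm i)) measurable_fst]
    refine tendsto_lintegral_of_dominated_convergence (fun _ => 1) (fun n => ?_)
      (fun n => Eventually.of_forall fun p => prob_le_one) (by simp)
      (Eventually.of_forall fun p => hc1 i p)
    exact (measurable_from_nat (f := fun j => P (x j).1 (B i))).comp (hkm n)
  have l2 : Tendsto (fun n => (ζ n).map (f := Prod.snd) measurable_snd.aemeasurable) atTop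
      (𝓝 A') := by
    refine hpi.tendsto_probabilityMeasure_of_tendsto_of_mem ?_ hnb ?_
    · rintro _ ⟨i, rfl⟩; exact hBm i
    rintro _ ⟨i, rfl⟩
    rw [← ENNReal.tendsto_coe]
    simp only [ProbabilityMeasure.ennreal_coeFn_eq_coeFn_toMeasure]
    have e : ∀ n, (((ζ n).map (f := Prod.snd) measurable_snd.aemeasurable :
        ProbabilityMeasure Y) : Measure Y) (B i) = ∫⁻ p, P (x (k n p)).2 (B i) ∂ξ := by
      intro n
      change (ζ' n).map Prod.snd (B i) = _
      rw [Measure.map_apply measurable_snd (hBm i), Measure.bind_apply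
        (measurable_snd (hBm i)) (hηm n).aemeasurable]
      refine lintegral_congr fun p => ?_
      rw [← hη2 n (k n p), Measure.map_apply measurable_snd (hBm i)]
    simp only [e]
    rw [hA']
    rw [Measure.bind_apply (hBm i) P.measurable.aemeasurable,
      lintegral_map (P.measurable_coe (hBm i)) measurable_snd]
    refine tendsto_lintegral_of_dominated_convergence (fun _ => 1) (fun n => ?_)
      (fun n => Eventually.of_forall fun p => prob_le_one) (by simp)
      (Eventually.of_forall fun p => hc2 i p)
    exact (measurable_from_nat (f := fun j => P (x j).2 (B i))).comp (hkm n)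
  have hε : Tendsto (fun n : ℕ => ENNReal.ofReal (1 / ((n : ℝ) + 1))) atTop (𝓝 0) := by
    simpa using ENNReal.tendsto_ofReal (tendsto_one_div_add_atTop_nhds_zero_nat (𝕜 := ℝ))
  rw [← hA, ← hA']
  refine aux_limit d hd_nonneg hd_lsc l1 l2
    (c := fun n => τ * ∫⁻ p, ENNReal.ofReal (d p.1 p.2) ∂ξ
      + (τ * ENNReal.ofReal (1 / ((n : ℝ) + 1)) + ENNReal.ofReal (1 / ((n : ℝ) + 1)))) ?_ ?_
  · have h1 := ENNReal.Tendsto.const_mul (a := τ) hε (Or.inr hP.ne)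
    have h2 := tendsto_const_nhds (x := τ * ∫⁻ p, ENNReal.ofReal (d p.1 p.2) ∂ξ).add (h1.add hε)
    simpa using h2
  · intro n
    change ∫⁻ p, ENNReal.ofReal (d p.1 p.2) ∂(ζ' n) ≤ _
    rw [Measure.lintegral_bind (hηm n).aemeasurable hd_m.ennreal_ofReal.aemeasurable]
    calc _ ≤ ∫⁻ p, (τ * ENNReal.ofReal (d p.1 p.2)
          + (τ * ENNReal.ofReal (1 / ((n : ℝ) + 1)) + ENNReal.ofReal (1 / ((n : ℝ) + 1)))) ∂ξ := by
          refine lintegral_mono fun p => (hη3 n (k n p)).trans ?_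
          rw [← add_assoc, ← mul_add, ← ENNReal.ofReal_add (hd_nonneg _ _) (hpos n).le]
          gcongr
          exact hdle n p
      _ = _ := by
          rw [lintegral_add_right _ measurable_const, lintegral_const_mul _ hd_m.ennreal_ofReal]
          simp

/-- Contractivity: `W(μ₁P, μ₂P) ≤ τ(P) · W(μ₁, μ₂)`, where `μP` is the pushforward
`(μP)(A) = ∫ P(y,A) μ(dy)`. -/
theorem wassersteinLike_bind_le
    {Y : Type*} [MetricSpace Y] [PolishSpace Y] [MeasurableSpace Y] [BorelSpace Y]
    (d : Y → Y → ℝ)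
    (hd_nonneg : ∀ x y, 0 ≤ d x y)
    (hd_symm : ∀ x y, d x y = d y x)
    (hd_eq : ∀ x y, d x y = 0 ↔ x = y)
    (hd_lsc : LowerSemicontinuous (fun p : Y × Y => d p.1 p.2))
    (P : Kernel Y Y) [IsMarkovKernel P]
    (hP : wContractionCoeff d P < ⊤)
    (μ₁ μ₂ : Measure Y) [IsProbabilityMeasure μ₁] [IsProbabilityMeasure μ₂] :
    wassersteinLike d (μ₁.bind P) (μ₂.bind P) ≤
      wContractionCoeff d P * wassersteinLike d μ₁ μ₂ := by
  have key : ∀ ξ : Measure (Y × Y), ξ.map Prod.fst = μ₁ → ξ.map Prod.snd = μ₂ →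
      wassersteinLike d (μ₁.bind P) (μ₂.bind P) ≤
        wContractionCoeff d P * ∫⁻ p, ENNReal.ofReal (d p.1 p.2) ∂ξ := by
    intro ξ h1 h2
    haveI : IsProbabilityMeasure ξ := by
      constructor
      have := congrArg (fun m => m Set.univ) h1
      simpa [Measure.map_apply measurable_fst] using this
    have := aux_main d hd_nonneg hd_eq hd_lsc P hP ξ
    rwa [h1, h2] at this
  by_cases h0 : wContractionCoeff d P = 0
  · have := key (μ₁.prod μ₂) (by simp [Measure.map_fst_prod]) (by simp [Measure.map_snd_prod])
    rw [h0, zero_mul] at this ⊢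
    exact this
  · conv_rhs => rw [wassersteinLike]
    rw [ENNReal.mul_iInf_of_ne h0 hP.ne]
    refine le_iInf fun ξ => ?_
    rw [ENNReal.mul_iInf_of_ne h0 hP.ne]
    refine le_iInf fun h1 => ?_
    rw [ENNReal.mul_iInf_of_ne h0 hP.ne]
    exact le_iInf fun h2 => key ξ h1 h2
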